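/- Let t ∈ ℝ with t ≠ 0 and let z ∈ ℂ with z ∉ (−∞, 0]. If K_{it}(z) = 0, then z is a positive real number; that is, for purely imaginary order all zeros of the Macdonald function in the principal Riemann sheet lie on the positive real semiaxis. -/

import Mathlib

open Complex Asymptotics

/-- The entire series `∑ (z²/4)^k / (k! (a)_k)` appearing in the ascending expansion
of the Macdonald function (with `a = 1 ∓ ν`). -/
noncomputable def macdonaldS (a z : ℂ) : ℂ :=
  ∑' k : ℕ, (z ^ 2 / 4) ^ k / ((k.factorial : ℂ) * (ascPochhammer ℂ k).eval a)

/-- The Macdonald function `K_ν(z)` defined by its ascending series, for `ν` not an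
integer and `z` off the cut `(-∞, 0]`, with principal complex powers. -/
noncomputable def macdonaldK (ν z : ℂ) : ℂ :=
  ((Real.pi : ℂ) / 2) / Complex.sin (ν * (Real.pi : ℂ)) *
    ((z / 2) ^ (-ν) / Complex.Gamma (1 - ν) * macdonaldS (1 - ν) z -
     (z / 2) ^ ν / Complex.Gamma (1 + ν) * macdonaldS (1 + ν) z)

/-!
Along the ray `x ↦ z e^x`, the function `u(x) = K_{it}(z e^x)` solves `u'' = (z² e^{2x} - t²) u`,
so the flux `Im (conj u · u')` has derivative `Im (z²) e^{2x} |u|²` and is monotone. As `x → -∞`,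
`u` is asymptotic to a combination of the plane waves `e^{itx}` and `e^{-itx}`; when `Im z > 0` the
coefficients make the limit of the flux negative. Suppose moreover `K_{it}(z) = u(0) = 0`, so that
the flux vanishes at `0`. If `Re z ≤ 0`, the flux is nonincreasing, which is incompatible with its
negative limit. If `Re z > 0`, the integral representation of `K` shows that the flux tends to `0`
at `+∞`; being nondecreasing and zero at `0`, it is constant there, so `u = 0` on `(0, ∞)`,
contradicting the Wronskian `-1` of `I_{it}` and `K_{it}`. The case `Im z < 0` follows by complex
conjugation.
-/

open Filter MeasureTheory Topology
open scoped ComplexConjugate Nat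

section RegularizedHypergeometric

variable {a b : Multiset ℂ}

lemma hasSum_regularizedHGFun (h : a.card ≤ b.card) (z : ℂ) :
    HasSum (fun n ↦ regularizedHGFunCoeff a b n * z ^ n) (regularizedHGFun a b z) := by
  have hz : z ∈ Metric.eball 0 (regularizedHGFunSeries a b).radius := by
    simp [radius_regularizedHGFunSeries_eq_top h]
  have := (regularizedHGFunSeries a b).hasSum hz
  simp_rw [FormalMultilinearSeries.apply_eq_pow_smul_coeff, regularizedHGFunSeries_coeff,
    smul_eq_mul, mul_comm (z ^ _)] at this
  exact this

lemma succ_mul_regularizedHGFunCoeff_succ (n : ℕ) :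
    (n + 1) * regularizedHGFunCoeff a b (n + 1) =
      a.prod * regularizedHGFunCoeff (a.map (· + 1)) (b.map (· + 1)) n := by
  have ha : (a.map (ascPochhammer ℂ (n + 1)).eval).prod =
      a.prod * ((a.map (· + 1)).map (ascPochhammer ℂ n).eval).prod := by
    simp [ascPochhammer_succ_left, Multiset.prod_map_mul]
  have hb : b.map (fun c ↦ Gamma (c + (n + 1 : ℕ))) =
      (b.map (· + 1)).map (fun c ↦ Gamma (c + n)) := by
    simp [add_assoc, add_comm (1 : ℂ)]
  rw [regularizedHGFunCoeff, regularizedHGFunCoeff, ha, hb, Nat.factorial_succ]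
  push_cast
  field_simp

lemma hasDerivAt_regularizedHGFun (h : a.card ≤ b.card) (z : ℂ) :
    HasDerivAt (regularizedHGFun a b)
      (a.prod * regularizedHGFun (a.map (· + 1)) (b.map (· + 1)) z) z := by
  have hz : z ∈ Metric.eball 0 (regularizedHGFunSeries a b).radius := by
    simp [radius_regularizedHGFunSeries_eq_top h]
  have hp := (regularizedHGFunSeries a b).hasFPowerSeriesOnBall (pos_of_gt hz)
  have hderiv : HasDerivAt (regularizedHGFun a b) (deriv (regularizedHGFun a b) z) z :=
    (hp.analyticAt_of_mem hz).differentiableAt.hasDerivAt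
  have hsum := (hp.fderiv.hasSum hz).mapL (ContinuousLinearMap.apply ℂ ℂ 1)
  have hcoeff (n : ℕ) : ContinuousLinearMap.apply ℂ ℂ 1
      ((regularizedHGFunSeries a b).derivSeries n fun _ ↦ z) =
        a.prod * (regularizedHGFunCoeff (a.map (· + 1)) (b.map (· + 1)) n * z ^ n) := by
    rw [← mul_assoc, ← succ_mul_regularizedHGFunCoeff_succ]
    simp only [FormalMultilinearSeries.apply_eq_pow_smul_coeff, map_smul,
      ContinuousLinearMap.apply_apply, FormalMultilinearSeries.derivSeries_coeff_one,
      regularizedHGFunSeries_coeff, nsmul_eq_mul, Nat.cast_add, Nat.cast_one, smul_eq_mul]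
    ring
  have hshift := (hasSum_regularizedHGFun (a := a.map (· + 1)) (b := b.map (· + 1))
    (by simpa) z).mul_left a.prod
  simp_rw [hcoeff] at hsum
  rw [hshift.unique hsum]
  convert! hderiv using 1
  simp only [zero_add, ContinuousLinearMap.apply_apply, fderiv_eq_smul_deriv, smul_eq_mul, one_mul]
  rfl

end RegularizedHypergeometric

/-- The regularized confluent hypergeometric limit function
`₀F₁(; c; w) / Γ(c) = ∑ w ^ k / (k! Γ(c + k))`, entire in both variables. -/
noncomputable def regularizedHGLimit (c w : ℂ) : ℂ :=
  regularizedHGFun 0 {c} w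

lemma hasSum_regularizedHGLimit (c w : ℂ) :
    HasSum (fun k : ℕ ↦ w ^ k / (k ! * Gamma (c + k))) (regularizedHGLimit c w) := by
  simpa [regularizedHGFunCoeff, div_eq_inv_mul, regularizedHGLimit] using
    hasSum_regularizedHGFun (a := 0) (b := {c}) (by simp) w

lemma hasDerivAt_regularizedHGLimit (c w : ℂ) :
    HasDerivAt (regularizedHGLimit c) (regularizedHGLimit (c + 1) w) w := by
  simpa [regularizedHGLimit] using!
    hasDerivAt_regularizedHGFun (a := 0) (b := {c}) (by simp) w

lemma continuous_regularizedHGLimit (c : ℂ) : Continuous (regularizedHGLimit c) :=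
  continuous_iff_continuousAt.2 fun w ↦ (hasDerivAt_regularizedHGLimit c w).continuousAt

lemma regularizedHGLimit_zero (c : ℂ) : regularizedHGLimit c 0 = (Gamma c)⁻¹ := by
  refine (hasSum_regularizedHGLimit c 0).unique ?_
  simpa using hasSum_single (f := fun k : ℕ ↦ (0 : ℂ) ^ k / (k ! * Gamma (c + k))) 0
    (by simp +contextual)

lemma regularizedHGLimit_eq_add (c w : ℂ) :
    regularizedHGLimit c w =
      c * regularizedHGLimit (c + 1) w + w * regularizedHGLimit (c + 2) w := by
  refine (hasSum_regularizedHGLimit c w).unique ?_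
  have hshift : HasSum (fun k : ℕ ↦ k * (w ^ k / (k ! * Gamma (c + 1 + k))))
      (w * regularizedHGLimit (c + 2) w) := by
    rw [← hasSum_nat_add_iff' 1]
    convert! (hasSum_regularizedHGLimit (c + 2) w).mul_left w using 1
    · ext k
      rw [Nat.factorial_succ, show c + 1 + (k + 1 : ℕ) = c + 2 + k by push_cast; ring]
      push_cast
      field_simp
      ring
    · simp
  convert! ((hasSum_regularizedHGLimit (c + 1) w).mul_left c).add hshift using 2 with k
  have hGamma := one_div_Gamma_eq_self_mul_one_div_Gamma_add_one (c + k)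
  rw [div_mul_eq_div_div_swap, div_eq_mul_inv _ (Gamma _), hGamma, add_right_comm c 1]
  ring

lemma macdonaldS_div_Gamma {c : ℂ} (hc : ∀ k : ℕ, c ≠ -k) (z : ℂ) :
    macdonaldS c z / Gamma c = regularizedHGLimit c (z ^ 2 / 4) := by
  rw [macdonaldS, ← tsum_div_const, ← (hasSum_regularizedHGLimit c (z ^ 2 / 4)).tsum_eq]
  congr with k
  rw [← Gamma_add_nat_div_Gamma_eq c hc]
  have := Gamma_ne_zero hc
  field_simp

/-- The modified Bessel function of the first kind `I_ν(z)`, on the principal branch. -/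
noncomputable def besselI (ν z : ℂ) : ℂ :=
  (z / 2) ^ ν * regularizedHGLimit (1 + ν) (z ^ 2 / 4)

lemma macdonaldK_eq_besselI {ν : ℂ} (hν : ∀ n : ℤ, ν ≠ n) (z : ℂ) :
    macdonaldK ν z = Real.pi / 2 / sin (ν * Real.pi) * (besselI (-ν) z - besselI ν z) := by
  have hneg (k : ℕ) : 1 - ν ≠ -k := fun h ↦
    hν (k + 1) (by push_cast; linear_combination -h)
  have hpos (k : ℕ) : 1 + ν ≠ -k := fun h ↦
    hν (-(k + 1)) (by push_cast; linear_combination h)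
  rw [macdonaldK, besselI, besselI, ← sub_eq_add_neg, ← macdonaldS_div_Gamma hneg,
    ← macdonaldS_div_Gamma hpos]
  ring

lemma half_mem_slitPlane {z : ℂ} (hz : z ∈ slitPlane) : z / 2 ∈ slitPlane := by
  rcases hz with h | h
  · exact .inl (by simpa using h)
  · exact .inr (by simpa using h)

lemma besselI_sub_one_sub_besselI_add_one {z : ℂ} (hz : z ≠ 0) (ν : ℂ) :
    z / 2 * (besselI (ν - 1) z - besselI (ν + 1) z) = ν * besselI ν z := by
  have hz2 : z / 2 ≠ 0 := by simpa
  simp only [besselI, cpow_sub _ _ hz2, cpow_add _ _ hz2, cpow_one]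
  rw [add_sub_cancel, regularizedHGLimit_eq_add ν, add_comm 1 ν, add_left_comm 1 ν 1,
    one_add_one_eq_two]
  field_simp
  ring

lemma hasDerivAt_besselI {z : ℂ} (hz : z ∈ slitPlane) (ν : ℂ) :
    HasDerivAt (besselI ν) ((besselI (ν - 1) z + besselI (ν + 1) z) / 2) z := by
  have hz0 := slitPlane_ne_zero hz
  have hz2 : z / 2 ≠ 0 := by simpa
  have hpow : HasDerivAt (fun z : ℂ ↦ (z / 2) ^ ν) (ν * (z / 2) ^ (ν - 1) * (1 / 2)) z :=
    ((hasDerivAt_id z).div_const 2).cpow_const (half_mem_slitPlane hz)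
  have hsq : HasDerivAt (fun z : ℂ ↦ z ^ 2 / 4) (z / 2) z := by
    convert! (hasDerivAt_pow 2 z).div_const 4 using 1
    push_cast
    ring
  convert! hpow.mul ((hasDerivAt_regularizedHGLimit (1 + ν) (z ^ 2 / 4)).comp z hsq) using 1
  have hrec := besselI_sub_one_sub_besselI_add_one hz0 ν
  simp only [besselI, cpow_sub _ _ hz2, cpow_add _ _ hz2, cpow_one] at hrec ⊢
  simp only [Function.comp_apply, ← add_assoc, add_sub_cancel] at hrec ⊢
  field_simp at hrec ⊢
  linear_combination hrec

/-- `f` solves the stationary Schrödinger equation `f'' = V f` on the real line. -/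
structure IsSchrodingerSolution (V f : ℝ → ℂ) : Prop where
  differentiable : Differentiable ℝ f
  hasDerivAt_deriv (x : ℝ) : HasDerivAt (deriv f) (V x * f x) x

/-- The Wronskian `f g' - f' g`. -/
noncomputable def wronskian (f g : ℝ → ℂ) (x : ℝ) : ℂ :=
  f x * deriv g x - deriv f x * g x

/-- The flux (probability current) `Im (conj f · f')`. -/
noncomputable def flux (f : ℝ → ℂ) (x : ℝ) : ℝ :=
  (conj (f x) * deriv f x).im

lemma flux_eq_zero_of_eq_zero {f : ℝ → ℂ} {x : ℝ} (h : f x = 0) : flux f x = 0 := by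
  simp [flux, h]

namespace IsSchrodingerSolution

variable {V f g : ℝ → ℂ}

lemma of_hasDerivAt (hf : ∀ x, HasDerivAt f (g x) x) (hg : ∀ x, HasDerivAt g (V x * f x) x) :
    IsSchrodingerSolution V f := by
  have hderiv : deriv f = g := funext fun x ↦ (hf x).deriv
  exact ⟨fun x ↦ (hf x).differentiableAt, hderiv ▸ hg⟩

lemma hasDerivAt (hf : IsSchrodingerSolution V f) (x : ℝ) : HasDerivAt f (deriv f x) x :=
  (hf.differentiable x).hasDerivAt

lemma const_mul (c : ℂ) (hf : IsSchrodingerSolution V f) :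
    IsSchrodingerSolution V fun x ↦ c * f x :=
  of_hasDerivAt (fun x ↦ (hf.hasDerivAt x).const_mul c) fun x ↦
    (mul_left_comm c (V x) (f x)) ▸ (hf.hasDerivAt_deriv x).const_mul c

lemma sub (hf : IsSchrodingerSolution V f) (hg : IsSchrodingerSolution V g) :
    IsSchrodingerSolution V fun x ↦ f x - g x :=
  of_hasDerivAt (fun x ↦ (hf.hasDerivAt x).sub (hg.hasDerivAt x)) fun x ↦
    (mul_sub (V x) (f x) (g x)) ▸ (hf.hasDerivAt_deriv x).sub (hg.hasDerivAt_deriv x)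

lemma wronskian_eq (hf : IsSchrodingerSolution V f) (hg : IsSchrodingerSolution V g) (x y : ℝ) :
    wronskian f g x = wronskian f g y := by
  have hderiv (x : ℝ) : HasDerivAt (wronskian f g) 0 x := by
    convert! ((hf.hasDerivAt x).mul (hg.hasDerivAt_deriv x)).sub
      ((hf.hasDerivAt_deriv x).mul (hg.hasDerivAt x)) using 1
    ring
  exact is_const_of_deriv_eq_zero (fun x ↦ (hderiv x).differentiableAt)
    (fun x ↦ (hderiv x).deriv) x y

lemma wronskian_eq_of_tendsto {l : Filter ℝ} [l.NeBot] {c : ℂ} (hf : IsSchrodingerSolution V f)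
    (hg : IsSchrodingerSolution V g) (h : Tendsto (wronskian f g) l (𝓝 c)) (x : ℝ) :
    wronskian f g x = c :=
  tendsto_nhds_unique (tendsto_const_nhds.congr fun y ↦ hf.wronskian_eq hg x y) h

lemma eq_zero_of_tendsto_wronskian {l : Filter ℝ} [l.NeBot] {f₁ f₂ : ℝ → ℂ} {c : ℂ}
    (hf : IsSchrodingerSolution V f) (hf₁ : IsSchrodingerSolution V f₁)
    (hf₂ : IsSchrodingerSolution V f₂) (h₁ : Tendsto (wronskian f₁ f) l (𝓝 0))
    (h₂ : Tendsto (wronskian f₂ f) l (𝓝 0)) (h₁₂ : Tendsto (wronskian f₁ f₂) l (𝓝 c))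
    (hc : c ≠ 0) : f = 0 := by
  funext x
  have e₁ : f₁ x * deriv f x - deriv f₁ x * f x = 0 := hf₁.wronskian_eq_of_tendsto hf h₁ x
  have e₂ : f₂ x * deriv f x - deriv f₂ x * f x = 0 := hf₂.wronskian_eq_of_tendsto hf h₂ x
  have e₁₂ : f₁ x * deriv f₂ x - deriv f₁ x * f₂ x = c := hf₁.wronskian_eq_of_tendsto hf₂ h₁₂ x
  refine (mul_eq_zero.1 (?_ : c * f x = 0)).resolve_left hc
  linear_combination f₂ x * e₁ - f₁ x * e₂ - f x * e₁₂

lemma hasDerivAt_flux (hf : IsSchrodingerSolution V f) (x : ℝ) :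
    HasDerivAt (flux f) ((V x).im * normSq (f x)) x := by
  have hprod := (hf.hasDerivAt x).star.mul (hf.hasDerivAt_deriv x)
  convert! imCLM.hasFDerivAt.comp_hasDerivAt x hprod using 1
  simp only [normSq_apply, imCLM_apply, RCLike.star_def, add_im, mul_im, mul_re, conj_re, conj_im]
  ring

lemma flux_monotone (hf : IsSchrodingerSolution V f) (hV : ∀ x, 0 ≤ (V x).im) :
    Monotone (flux f) :=
  monotone_of_hasDerivAt_nonneg hf.hasDerivAt_flux fun x ↦ mul_nonneg (hV x) (normSq_nonneg _)

lemma flux_antitone (hf : IsSchrodingerSolution V f) (hV : ∀ x, (V x).im ≤ 0) :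
    Antitone (flux f) :=
  antitone_of_hasDerivAt_nonpos hf.hasDerivAt_flux fun x ↦
    mul_nonpos_of_nonpos_of_nonneg (hV x) (normSq_nonneg _)

lemma eq_zero_of_tendsto_flux_atTop (hf : IsSchrodingerSolution V f) (hV : ∀ x, 0 < (V x).im)
    {x₀ : ℝ} (h₀ : flux f x₀ = 0) (hlim : Tendsto (flux f) atTop (𝓝 0)) {x : ℝ} (hx : x₀ < x) :
    f x = 0 := by
  have hmono := hf.flux_monotone fun x ↦ (hV x).le
  have hzero : flux f =ᶠ[𝓝 x] 0 := by
    filter_upwards [Ioi_mem_nhds hx] with y hy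
    exact le_antisymm (hmono.ge_of_tendsto hlim y) (h₀.ge.trans (hmono hy.le))
  have hderiv : (V x).im * normSq (f x) = 0 := by
    rw [← (hf.hasDerivAt_flux x).deriv, hzero.deriv_eq]
    exact deriv_const x 0
  exact normSq_eq_zero.1 ((mul_eq_zero.1 hderiv).resolve_left (hV x).ne')

end IsSchrodingerSolution

lemma tendsto_mul_sub_mul {ι R : Type*} [SeminormedRing R] {l : Filter ι} {a a₀ b b₀ : ι → R}
    (ha : Tendsto (fun i ↦ a i - a₀ i) l (𝓝 0)) (hb : Tendsto (fun i ↦ b i - b₀ i) l (𝓝 0))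
    (ha₀ : IsBoundedUnder (· ≤ ·) l (norm ∘ a₀)) (hb₀ : IsBoundedUnder (· ≤ ·) l (norm ∘ b₀)) :
    Tendsto (fun i ↦ a i * b i - a₀ i * b₀ i) l (𝓝 0) := by
  have h := ((ha.mul hb).add (isBoundedUnder_le_mul_tendsto_zero ha₀ hb)).add
    (ha.zero_mul_isBoundedUnder_le hb₀)
  simp only [mul_zero, add_zero] at h
  refine h.congr fun i ↦ ?_
  noncomm_ring

/-- The plane wave `α e^{νx} + β e^{-νx}`. -/
noncomputable def planeWave (ν α β : ℂ) (x : ℝ) : ℂ :=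
  α * cexp (ν * x) + β * cexp (-ν * x)

/-- `f` and its derivative are asymptotic at `-∞` to the plane wave `α e^{νx} + β e^{-νx}` and its
derivative. -/
structure IsPlaneWaveAtBot (ν α β : ℂ) (f : ℝ → ℂ) : Prop where
  tendsto_sub : Tendsto (fun x ↦ f x - planeWave ν α β x) atBot (𝓝 0)
  tendsto_deriv_sub : Tendsto (fun x ↦ deriv f x - planeWave ν (ν * α) (-ν * β) x) atBot (𝓝 0)

lemma isBoundedUnder_norm_planeWave {ν : ℂ} (hν : ν.re = 0) (α β : ℂ) (l : Filter ℝ) :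
    IsBoundedUnder (· ≤ ·) l (norm ∘ planeWave ν α β) := by
  refine isBoundedUnder_of ⟨‖α‖ + ‖β‖, fun x ↦ (norm_add_le _ _).trans_eq ?_⟩
  simp [norm_exp, hν]

lemma im_conj_planeWave_mul (t x : ℝ) (α β : ℂ) :
    (conj (planeWave (t * I) α β x) * planeWave (t * I) (t * I * α) (-(t * I) * β) x).im =
      t * (normSq α - normSq β) := by
  set u := cexp (t * I * x) with hu
  have hu' : cexp (-(t * I) * x) = conj u := by simp [hu, ← exp_conj]
  have huu : u * conj u = 1 := by simp [hu, ← exp_conj, ← Complex.exp_add]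
  have hprod : conj (planeWave (t * I) α β x) *
      planeWave (t * I) (t * I * α) (-(t * I) * β) x =
        t * I * (normSq α - normSq β + (conj β * α * u ^ 2 - conj (conj β * α * u ^ 2))) := by
    simp only [planeWave, ← hu, hu', map_add, map_mul, map_pow, conj_conj, normSq_eq_conj_mul_self]
    linear_combination (t * I * (conj α * α - conj β * β)) * huu
  rw [hprod, sub_conj]
  simp

namespace IsPlaneWaveAtBot

variable {ν α β α₁ β₁ α₂ β₂ : ℂ} {f f₁ f₂ : ℝ → ℂ}

lemma const_mul (c : ℂ) (hf : IsPlaneWaveAtBot ν α β f) :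
    IsPlaneWaveAtBot ν (c * α) (c * β) fun x ↦ c * f x where
  tendsto_sub := by
    refine (mul_zero c ▸ hf.tendsto_sub.const_mul c).congr fun x ↦ ?_
    simp only [planeWave]
    ring
  tendsto_deriv_sub := by
    refine (mul_zero c ▸ hf.tendsto_deriv_sub.const_mul c).congr fun x ↦ ?_
    simp only [deriv_const_mul_field, planeWave]
    ring

lemma sub (h₁ : IsPlaneWaveAtBot ν α₁ β₁ f₁) (h₂ : IsPlaneWaveAtBot ν α₂ β₂ f₂)
    (hf₁ : Differentiable ℝ f₁) (hf₂ : Differentiable ℝ f₂) :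
    IsPlaneWaveAtBot ν (α₁ - α₂) (β₁ - β₂) fun x ↦ f₁ x - f₂ x where
  tendsto_sub := by
    refine (sub_zero (0 : ℂ) ▸ h₁.tendsto_sub.sub h₂.tendsto_sub).congr fun x ↦ ?_
    simp only [planeWave]
    ring
  tendsto_deriv_sub := by
    refine (sub_zero (0 : ℂ) ▸ h₁.tendsto_deriv_sub.sub h₂.tendsto_deriv_sub).congr fun x ↦ ?_
    simp only [deriv_fun_sub (hf₁ x) (hf₂ x), planeWave]
    ring

lemma neg_order (hf : IsPlaneWaveAtBot (-ν) α β f) : IsPlaneWaveAtBot ν β α f where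
  tendsto_sub := hf.tendsto_sub.congr fun x ↦ by
    simp only [planeWave, neg_neg]
    ring
  tendsto_deriv_sub := hf.tendsto_deriv_sub.congr fun x ↦ by
    simp only [planeWave, neg_neg]
    ring

lemma tendsto_wronskian (hν : ν.re = 0) (h₁ : IsPlaneWaveAtBot ν α₁ β₁ f₁)
    (h₂ : IsPlaneWaveAtBot ν α₂ β₂ f₂) :
    Tendsto (wronskian f₁ f₂) atBot (𝓝 (2 * ν * (β₁ * α₂ - α₁ * β₂))) := by
  have hbdd := isBoundedUnder_norm_planeWave hν
  have hfg' := tendsto_mul_sub_mul h₁.tendsto_sub h₂.tendsto_deriv_sub (hbdd ..) (hbdd ..)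
  have hf'g := tendsto_mul_sub_mul h₁.tendsto_deriv_sub h₂.tendsto_sub (hbdd ..) (hbdd ..)
  have h := (hfg'.sub hf'g).add_const (2 * ν * (β₁ * α₂ - α₁ * β₂))
  rw [sub_zero, zero_add] at h
  refine h.congr fun x ↦ ?_
  have hexp : cexp (ν * x) * cexp (-ν * x) = 1 := by simp [← Complex.exp_add]
  simp only [wronskian, planeWave]
  linear_combination (2 * ν * (α₁ * β₂ - β₁ * α₂)) * hexp

lemma tendsto_flux {t : ℝ} (hf : IsPlaneWaveAtBot (t * I) α β f) :
    Tendsto (flux f) atBot (𝓝 (t * (normSq α - normSq β))) := by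
  have hν : (t * I).re = 0 := by simp
  have hbdd := isBoundedUnder_norm_planeWave hν
  have hstar : Tendsto (fun x ↦ conj (f x) - conj (planeWave (t * I) α β x)) atBot (𝓝 0) := by
    simpa using hf.tendsto_sub.star
  have h := (continuous_im.tendsto _).comp (tendsto_mul_sub_mul hstar hf.tendsto_deriv_sub
    (by simpa [Function.comp_def] using hbdd α β atBot) (hbdd ..))
  have h' := h.add_const (t * (normSq α - normSq β))
  rw [zero_im, zero_add] at h'
  refine h'.congr fun x ↦ ?_
  rw [Function.comp_apply, sub_im, im_conj_planeWave_mul, sub_add_cancel, flux]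

end IsPlaneWaveAtBot

lemma mul_exp_cpow {z : ℂ} (hz : z ≠ 0) (x : ℝ) (ν : ℂ) :
    (z * cexp x) ^ ν = z ^ ν * cexp (ν * x) := by
  rw [cpow_def_of_ne_zero (mul_ne_zero hz (exp_ne_zero _)), cpow_def_of_ne_zero hz,
    ← Complex.exp_add, ← ofReal_exp, log_mul_ofReal _ (Real.exp_pos x) _ hz, Real.log_exp]
  ring_nf

lemma mul_exp_mem_slitPlane {z : ℂ} (hz : z ∈ slitPlane) (x : ℝ) : z * cexp x ∈ slitPlane := by
  have hx := Real.exp_pos x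
  rw [← ofReal_exp, mem_slitPlane_iff, re_mul_ofReal, im_mul_ofReal]
  exact hz.imp (fun h ↦ mul_pos h hx) fun h ↦ mul_ne_zero h hx.ne'

lemma hasDerivAt_mul_exp (z : ℂ) (x : ℝ) :
    HasDerivAt (fun x : ℝ ↦ z * cexp x) (z * cexp x) x :=
  (Complex.hasDerivAt_exp x).comp_ofReal.const_mul z

lemma tendsto_mul_exp_atBot (z : ℂ) : Tendsto (fun x : ℝ ↦ z * cexp x) atBot (𝓝 0) := by
  have h := ((continuous_ofReal.tendsto 0).comp Real.tendsto_exp_atBot).const_mul z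
  simpa [Function.comp_def] using h

/-- The potential `z² e^{2x} + ν²` for which `x ↦ C_ν (z e^x)` solves the Schrödinger equation when
`C_ν` is a modified Bessel function. -/
noncomputable def besselPotential (ν z : ℂ) (x : ℝ) : ℂ :=
  (z * cexp x) ^ 2 + ν ^ 2

lemma besselPotential_im (t : ℝ) (z : ℂ) (x : ℝ) :
    (besselPotential (t * I) z x).im = 2 * z.re * z.im * Real.exp x ^ 2 := by
  have hsplit : besselPotential (t * I) z x = z ^ 2 * (Real.exp x ^ 2 : ℝ) - (t ^ 2 : ℝ) := by
    rw [besselPotential, mul_pow _ I, I_sq]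
    push_cast
    ring
  rw [hsplit, sub_im, im_mul_ofReal, ofReal_im, pow_two z, mul_im]
  ring

-- Both kinds of modified Bessel functions are covered: `σ = 1` for `I` and `σ = -1` for `K`.
lemma isSchrodingerSolution_of_recurrence {C : ℂ → ℂ → ℂ} {σ z : ℂ} (hσ : σ ^ 2 = 1)
    (hderiv : ∀ (ν : ℂ) (x : ℝ), HasDerivAt (C ν)
      (σ * ((C (ν - 1) (z * cexp x) + C (ν + 1) (z * cexp x)) / 2)) (z * cexp x))
    (hrec : ∀ (ν : ℂ) (x : ℝ),
      z * cexp x / 2 * (C (ν - 1) (z * cexp x) - C (ν + 1) (z * cexp x)) =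
        σ * (ν * C ν (z * cexp x))) (ν : ℂ) :
    IsSchrodingerSolution (besselPotential ν z) fun x ↦ C ν (z * cexp x) := by
  have hray (ν : ℂ) (x : ℝ) := (hderiv ν x).comp x (hasDerivAt_mul_exp z x)
  refine .of_hasDerivAt (hray ν) fun x ↦ ?_
  convert! (((hray (ν - 1) x).add (hray (ν + 1) x)).div_const 2).const_mul σ |>.mul
    (hasDerivAt_mul_exp z x) using 1
  have h₁ := hrec (ν - 1) x
  have h₂ := hrec (ν + 1) x
  have h₀ := hrec ν x
  simp only [besselPotential, Pi.add_apply, Function.comp_apply, sub_add_cancel,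
    add_sub_cancel_right] at h₁ h₂ ⊢
  set Z := z * cexp x
  linear_combination -σ ^ 2 * Z / 2 * (h₁ - h₂) - σ * ν * h₀ -
    ((Z ^ 2 + ν ^ 2) * C ν Z + Z / 2 * σ * ((ν - 1) * C (ν - 1) Z - (ν + 1) * C (ν + 1) Z)) * hσ

lemma isSchrodingerSolution_besselI {z : ℂ} (hz : z ∈ slitPlane) (ν : ℂ) :
    IsSchrodingerSolution (besselPotential ν z) fun x ↦ besselI ν (z * cexp x) := by
  refine isSchrodingerSolution_of_recurrence (one_pow 2) (fun ν x ↦ ?_) (fun ν x ↦ ?_) ν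
  · simpa using hasDerivAt_besselI (mul_exp_mem_slitPlane hz x) ν
  · simpa using besselI_sub_one_sub_besselI_add_one
      (slitPlane_ne_zero (mul_exp_mem_slitPlane hz x)) ν

lemma deriv_besselI_mul_exp {z : ℂ} (hz : z ∈ slitPlane) (ν : ℂ) (x : ℝ) :
    deriv (fun x : ℝ ↦ besselI ν (z * cexp x)) x =
      ν * besselI ν (z * cexp x) + z * cexp x * besselI (ν + 1) (z * cexp x) := by
  have hx := mul_exp_mem_slitPlane hz x
  have h := ((hasDerivAt_besselI hx ν).comp x (hasDerivAt_mul_exp z x)).deriv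
  rw [Function.comp_def] at h
  rw [h]
  linear_combination besselI_sub_one_sub_besselI_add_one (slitPlane_ne_zero hx) ν

lemma besselI_mul_exp {z : ℂ} (hz : z ≠ 0) (ν : ℂ) (x : ℝ) :
    besselI ν (z * cexp x) =
      (z / 2) ^ ν * cexp (ν * x) * regularizedHGLimit (1 + ν) ((z * cexp x) ^ 2 / 4) := by
  rw [besselI, ← div_mul_eq_mul_div, mul_exp_cpow (by simpa)]

lemma isPlaneWaveAtBot_besselI {ν z : ℂ} (hν : ν.re = 0) (hz : z ∈ slitPlane) :
    IsPlaneWaveAtBot ν ((z / 2) ^ ν / Gamma (1 + ν)) 0 fun x ↦ besselI ν (z * cexp x) := by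
  have hz0 := slitPlane_ne_zero hz
  have hray := tendsto_mul_exp_atBot z
  have hF (c : ℂ) : Tendsto (fun x : ℝ ↦ regularizedHGLimit c ((z * cexp x) ^ 2 / 4)) atBot
      (𝓝 (Gamma c)⁻¹) := by
    have := (continuous_regularizedHGLimit c).tendsto 0
    rw [regularizedHGLimit_zero] at this
    refine this.comp ?_
    simpa using (hray.pow 2).div_const 4
  have hexp := isBoundedUnder_norm_planeWave hν ((z / 2) ^ ν) 0 atBot
  have h₀ : Tendsto (fun x : ℝ ↦ besselI ν (z * cexp x) -
      planeWave ν ((z / 2) ^ ν / Gamma (1 + ν)) 0 x) atBot (𝓝 0) := by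
    have h := isBoundedUnder_le_mul_tendsto_zero hexp
      (sub_self (_ : ℂ) ▸ (hF (1 + ν)).sub_const (Gamma (1 + ν))⁻¹)
    refine h.congr fun x ↦ ?_
    simp only [besselI_mul_exp hz0, planeWave]
    ring
  have h₁ : Tendsto (fun x : ℝ ↦ z * cexp x * besselI (ν + 1) (z * cexp x)) atBot (𝓝 0) := by
    have h := isBoundedUnder_le_mul_tendsto_zero hexp
      (by simpa using ((hray.pow 2).div_const 2).mul (hF (1 + (ν + 1))))
    refine h.congr fun x ↦ ?_
    rw [besselI_mul_exp hz0, cpow_add _ _ (by simpa), cpow_one, add_one_mul, Complex.exp_add,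
      planeWave]
    ring
  refine ⟨h₀, ?_⟩
  have h := (h₀.const_mul ν).add h₁
  rw [mul_zero, add_zero] at h
  refine h.congr fun x ↦ ?_
  simp only [deriv_besselI_mul_exp hz, planeWave]
  ring

/-- The integrand `exp (ν u - z p(u))`, whose integral over `ℝ` is `z ^ (-ν) Γ(ν)` for `p = exp`
and `2 K_ν(z)` for `p = cosh`. -/
noncomputable def expIntegrand (p : ℝ → ℝ) (ν z : ℂ) (u : ℝ) : ℂ :=
  cexp (ν * u - z * p u)

section ExpIntegrand

variable {p p' : ℝ → ℝ} {ν z : ℂ}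

lemma norm_expIntegrand (p : ℝ → ℝ) (ν z : ℂ) (u : ℝ) :
    ‖expIntegrand p ν z u‖ = Real.exp (ν.re * u - z.re * p u) := by
  rw [expIntegrand, norm_exp, sub_re, re_mul_ofReal, re_mul_ofReal]

lemma cexp_mul_expIntegrand (p : ℝ → ℝ) (ν z : ℂ) (u : ℝ) :
    cexp u * expIntegrand p ν z u = expIntegrand p (ν + 1) z u := by
  rw [expIntegrand, expIntegrand, ← Complex.exp_add]
  ring_nf

lemma cexp_neg_mul_expIntegrand (p : ℝ → ℝ) (ν z : ℂ) (u : ℝ) :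
    cexp (-u) * expIntegrand p ν z u = expIntegrand p (ν - 1) z u := by
  rw [expIntegrand, expIntegrand, ← Complex.exp_add]
  ring_nf

lemma continuous_expIntegrand (hp : Continuous p) (ν z : ℂ) :
    Continuous (expIntegrand p ν z) := by
  unfold expIntegrand
  fun_prop

lemma integrable_expIntegrand (hp : Continuous p)
    (h : Integrable fun u ↦ Real.exp (ν.re * u - z.re * p u)) :
    Integrable (expIntegrand p ν z) :=
  h.mono' (continuous_expIntegrand hp ν z).aestronglyMeasurable
    (ae_of_all _ fun u ↦ (norm_expIntegrand p ν z u).le)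

lemma hasDerivAt_integral_expIntegrand (hp : Continuous p) (hp₀ : ∀ u, 0 ≤ p u)
    (h : Integrable (expIntegrand p ν z)) {c : ℝ} (hc : c < z.re)
    (hbound : Integrable fun u ↦ p u * Real.exp (ν.re * u - c * p u)) :
    HasDerivAt (fun z ↦ ∫ u, expIntegrand p ν z u) (-∫ u, p u * expIntegrand p ν z u) z := by
  rw [← integral_neg]
  refine (hasDerivAt_integral_of_dominated_loc_of_deriv_le
    (F := fun w u ↦ expIntegrand p ν w u) (F' := fun w u ↦ -(p u * expIntegrand p ν w u))
    ((isOpen_lt continuous_const continuous_re).mem_nhds hc)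
    (Eventually.of_forall fun w ↦ (continuous_expIntegrand hp ν w).aestronglyMeasurable) h ?_
    (ae_of_all _ fun u w hw ↦ ?_) hbound (ae_of_all _ fun u w _ ↦ ?_)).2
  · have := continuous_expIntegrand hp ν z
    fun_prop
  · rw [norm_neg, norm_mul, norm_real, Real.norm_of_nonneg (hp₀ u), norm_expIntegrand]
    have hw : c ≤ w.re := le_of_lt hw
    have := hp₀ u
    gcongr
  · have hlin : HasDerivAt (fun w : ℂ ↦ ν * u - w * p u) (-(p u : ℂ)) w := by
      simpa using ((hasDerivAt_id w).mul_const (p u : ℂ)).const_sub (ν * u)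
    convert! hlin.cexp using 1
    rw [expIntegrand]
    ring

lemma mul_integral_deriv_mul_expIntegrand (hp : ∀ u, HasDerivAt p (p' u) u)
    (h : Integrable (expIntegrand p ν z))
    (h' : Integrable fun u ↦ p' u * expIntegrand p ν z u) :
    z * ∫ u, p' u * expIntegrand p ν z u = ν * ∫ u, expIntegrand p ν z u := by
  have hderiv (u : ℝ) : HasDerivAt (expIntegrand p ν z)
      (ν * expIntegrand p ν z u - z * (p' u * expIntegrand p ν z u)) u := by
    have hlin : HasDerivAt (fun u : ℝ ↦ ν * u - z * p u) (ν - z * p' u) u := by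
      simpa using ((hasDerivAt_id u).ofReal_comp.const_mul ν).fun_sub
        ((hp u).ofReal_comp.const_mul z)
    convert! hlin.cexp using 1
    rw [expIntegrand]
    ring
  have hzero := integral_eq_zero_of_hasDerivAt_of_integrable hderiv
    ((h.const_mul ν).sub (h'.const_mul z)) h
  rw [integral_sub (h.const_mul ν) (h'.const_mul z), integral_const_mul, integral_const_mul]
    at hzero
  exact (sub_eq_zero.1 hzero).symm

end ExpIntegrand

section GammaIntegral

lemma integral_comp_rexp {E : Type*} [NormedAddCommGroup E] [NormedSpace ℝ E] (g : ℝ → E) :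
    ∫ u, Real.exp u • g (Real.exp u) = ∫ x in Set.Ioi 0, g x := by
  rw [← Real.range_exp, ← Set.image_univ, integral_image_eq_integral_abs_deriv_smul .univ
    (fun u _ ↦ (Real.hasDerivAt_exp u).hasDerivWithinAt) Real.exp_injective.injOn]
  simp

lemma integrable_comp_rexp {E : Type*} [NormedAddCommGroup E] [NormedSpace ℝ E] {g : ℝ → E} :
    (Integrable fun u ↦ Real.exp u • g (Real.exp u)) ↔ IntegrableOn g (Set.Ioi 0) := by
  rw [← Real.range_exp, ← Set.image_univ, integrableOn_image_iff_integrableOn_abs_deriv_smul .univ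
    (fun u _ ↦ (Real.hasDerivAt_exp u).hasDerivWithinAt) Real.exp_injective.injOn]
  simp

lemma integrable_rexp_sub_mul_rexp {m c : ℝ} (hm : 0 < m) (hc : 0 < c) :
    Integrable fun u ↦ Real.exp (m * u - c * Real.exp u) := by
  have h := integrable_comp_rexp.2 (integrableOn_rpow_mul_exp_neg_mul_rpow (p := 1) (s := m - 1)
    (by linarith) one_pos hc)
  convert! h using 2 with u
  rw [Real.rpow_one, ← Real.exp_mul, smul_eq_mul, ← Real.exp_add, ← Real.exp_add]
  ring_nf

variable {a w : ℂ}

lemma integrable_expIntegrand_rexp (ha : 0 < a.re) (hw : 0 < w.re) :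
    Integrable (expIntegrand Real.exp a w) :=
  integrable_expIntegrand Real.continuous_exp (integrable_rexp_sub_mul_rexp ha hw)

lemma integral_expIntegrand_rexp_one (ha : 0 < a.re) :
    ∫ u, expIntegrand Real.exp a 1 u = Gamma a := by
  rw [Gamma_eq_integral ha, GammaIntegral, ← integral_comp_rexp]
  congr with u
  have hexp : (Real.exp u : ℂ) ≠ 0 := mod_cast (Real.exp_pos u).ne'
  rw [expIntegrand, cpow_def_of_ne_zero hexp, ← ofReal_log (Real.exp_pos u).le, Real.log_exp,
    real_smul, one_mul, ofReal_exp, ofReal_exp, ofReal_neg, ← Complex.exp_add, ← Complex.exp_add]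
  push_cast
  ring_nf

lemma hasDerivAt_cpow_mul_integral_expIntegrand_rexp (ha : 0 < a.re) (hw : 0 < w.re) :
    HasDerivAt (fun w ↦ w ^ a * ∫ u, expIntegrand Real.exp a w u) 0 w := by
  have hw' : w ∈ slitPlane := .inl hw
  have hint := integrable_expIntegrand_rexp ha hw
  have hshift (u : ℝ) :
      Real.exp u * expIntegrand Real.exp a w u = expIntegrand Real.exp (a + 1) w u := by
    rw [← cexp_mul_expIntegrand, ofReal_exp]
  have hbound : Integrable fun u ↦ Real.exp u * Real.exp (a.re * u - w.re / 2 * Real.exp u) := by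
    have h := integrable_rexp_sub_mul_rexp (m := a.re + 1) (by positivity) (half_pos hw)
    refine h.congr (ae_of_all _ fun u ↦ ?_)
    simp only [← Real.exp_add]
    ring_nf
  have hderiv := hasDerivAt_integral_expIntegrand Real.continuous_exp
    (fun u ↦ (Real.exp_pos u).le) hint (half_lt_self hw) hbound
  have hrec := mul_integral_deriv_mul_expIntegrand Real.hasDerivAt_exp hint (by
    simpa only [hshift] using
      integrable_expIntegrand_rexp (a := a + 1) (by rw [add_re, one_re]; positivity) hw)
  convert! ((hasDerivAt_id w).cpow_const hw').mul hderiv using 1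
  have hpow : w ^ a = w ^ (a - 1) * w := by
    rw [cpow_sub _ _ (slitPlane_ne_zero hw'), cpow_one,
      div_mul_cancel₀ _ (slitPlane_ne_zero hw')]
  rw [id, hpow]
  linear_combination w ^ (a - 1) * hrec

lemma integral_expIntegrand_rexp (ha : 0 < a.re) (hw : 0 < w.re) :
    ∫ u, expIntegrand Real.exp a w u = w ^ (-a) * Gamma a := by
  have hw₀ : w ≠ 0 := slitPlane_ne_zero (.inl hw)
  have hconst := (isOpen_lt continuous_const continuous_re).is_const_of_deriv_eq_zero
    (convex_halfSpace_re_gt 0).isPreconnected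
    (fun w hw ↦ (hasDerivAt_cpow_mul_integral_expIntegrand_rexp ha
      hw).differentiableAt.differentiableWithinAt)
    (fun w hw ↦ (hasDerivAt_cpow_mul_integral_expIntegrand_rexp ha hw).deriv)
    hw (show (1 : ℂ) ∈ {w : ℂ | 0 < w.re} by simp)
  rw [one_cpow, one_mul, integral_expIntegrand_rexp_one ha] at hconst
  rw [← hconst, ← mul_assoc, ← cpow_add _ _ hw₀, neg_add_cancel, cpow_zero, one_mul]

end GammaIntegral

lemma sq_div_four_le_cosh (u : ℝ) : u ^ 2 / 4 ≤ Real.cosh u := by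
  have hexp := Real.quadratic_le_exp_of_nonneg (abs_nonneg u)
  rw [sq_abs] at hexp
  rw [← Real.cosh_abs, Real.cosh_eq]
  linarith [abs_nonneg u, Real.exp_pos (-|u|)]

lemma integrable_rexp_sub_mul_cosh (m : ℝ) {c : ℝ} (hc : 0 < c) :
    Integrable fun u ↦ Real.exp (m * u - c * Real.cosh u) := by
  have hc' : 0 < ((c / 4 : ℝ) : ℂ).re := by rw [ofReal_re]; positivity
  refine (integrable_cexp_quadratic hc' m 0).norm.mono' (by fun_prop) (ae_of_all _ fun u ↦ ?_)
  have hre : (-((c / 4 : ℝ) : ℂ) * u ^ 2 + m * u + 0).re = -(c / 4) * u ^ 2 + m * u := by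
    norm_cast
    simp
  rw [norm_exp, hre, Real.norm_of_nonneg (Real.exp_pos _).le, Real.exp_le_exp]
  linarith [mul_le_mul_of_nonneg_left (sq_div_four_le_cosh u) hc.le]

/-- The Macdonald function `K_ν(z)` in its integral representation `½ ∫ exp (ν u - z cosh u) du`,
which converges for `0 < re z`. -/
noncomputable def macdonaldIntegral (ν z : ℂ) : ℂ :=
  1 / 2 * ∫ u, expIntegrand Real.cosh ν z u

section MacdonaldIntegral

variable {ν z : ℂ}

lemma macdonaldIntegral_neg (ν z : ℂ) : macdonaldIntegral (-ν) z = macdonaldIntegral ν z := by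
  rw [macdonaldIntegral, macdonaldIntegral, ← integral_neg_eq_self (expIntegrand Real.cosh ν z)]
  simp [expIntegrand]

lemma integrable_expIntegrand_cosh (ν : ℂ) (hz : 0 < z.re) :
    Integrable (expIntegrand Real.cosh ν z) :=
  integrable_expIntegrand Real.continuous_cosh (integrable_rexp_sub_mul_cosh _ hz)

lemma hasDerivAt_macdonaldIntegral (ν : ℂ) (hz : 0 < z.re) :
    HasDerivAt (macdonaldIntegral ν)
      (-((macdonaldIntegral (ν - 1) z + macdonaldIntegral (ν + 1) z) / 2)) z := by
  have hbound : Integrable fun u ↦ Real.cosh u * Real.exp (ν.re * u - z.re / 2 * Real.cosh u) := by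
    have h := ((integrable_rexp_sub_mul_cosh (ν.re + 1) (half_pos hz)).fun_add
      (integrable_rexp_sub_mul_cosh (ν.re - 1) (half_pos hz))).div_const 2
    refine h.congr (ae_of_all _ fun u ↦ ?_)
    have hexp (ε : ℝ) : Real.exp ((ν.re + ε) * u - z.re / 2 * Real.cosh u) =
        Real.exp (ε * u) * Real.exp (ν.re * u - z.re / 2 * Real.cosh u) := by
      rw [← Real.exp_add]
      ring_nf
    simp only [sub_eq_add_neg ν.re, hexp, one_mul, neg_mul]
    linear_combination (-Real.exp (ν.re * u - z.re / 2 * Real.cosh u)) * Real.cosh_eq u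
  have hcosh (u : ℝ) : Real.cosh u * expIntegrand Real.cosh ν z u =
      (expIntegrand Real.cosh (ν - 1) z u + expIntegrand Real.cosh (ν + 1) z u) / 2 := by
    rw [← cexp_mul_expIntegrand, ← cexp_neg_mul_expIntegrand, ofReal_cosh, Complex.cosh]
    ring
  convert! (hasDerivAt_integral_expIntegrand Real.continuous_cosh (fun u ↦ (Real.cosh_pos u).le)
    (integrable_expIntegrand_cosh ν hz) (half_lt_self hz) hbound).const_mul (1 / 2) using 1
  simp only [hcosh]
  rw [integral_div, integral_add (integrable_expIntegrand_cosh _ hz)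
    (integrable_expIntegrand_cosh _ hz), macdonaldIntegral, macdonaldIntegral]
  ring

lemma macdonaldIntegral_sub_one_sub_macdonaldIntegral_add_one (ν : ℂ) (hz : 0 < z.re) :
    z / 2 * (macdonaldIntegral (ν - 1) z - macdonaldIntegral (ν + 1) z) =
      -(ν * macdonaldIntegral ν z) := by
  have hsinh (u : ℝ) : Real.sinh u * expIntegrand Real.cosh ν z u =
      (expIntegrand Real.cosh (ν + 1) z u - expIntegrand Real.cosh (ν - 1) z u) / 2 := by
    rw [← cexp_mul_expIntegrand, ← cexp_neg_mul_expIntegrand, ofReal_sinh, Complex.sinh]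
    ring
  have hint (μ : ℂ) := integrable_expIntegrand_cosh μ hz
  have h := mul_integral_deriv_mul_expIntegrand Real.hasDerivAt_cosh (hint ν)
    (by simpa only [hsinh, Pi.sub_apply] using ((hint (ν + 1)).sub (hint (ν - 1))).div_const 2)
  simp only [hsinh] at h
  rw [integral_div, integral_sub (hint _) (hint _)] at h
  simp only [macdonaldIntegral]
  linear_combination -h / 2

lemma mul_exp_re_pos (hz : 0 < z.re) (x : ℝ) : 0 < (z * cexp x).re := by
  rw [← ofReal_exp, re_mul_ofReal]
  exact mul_pos hz (Real.exp_pos x)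

lemma isSchrodingerSolution_macdonaldIntegral (ν : ℂ) (hz : 0 < z.re) :
    IsSchrodingerSolution (besselPotential ν z) fun x ↦ macdonaldIntegral ν (z * cexp x) := by
  refine isSchrodingerSolution_of_recurrence neg_one_sq (fun ν x ↦ ?_) (fun ν x ↦ ?_) ν
  · simpa using hasDerivAt_macdonaldIntegral ν (mul_exp_re_pos hz x)
  · simpa using macdonaldIntegral_sub_one_sub_macdonaldIntegral_add_one ν (mul_exp_re_pos hz x)

lemma norm_macdonaldIntegral_le (ν : ℂ) {c : ℝ} (hc : 0 < c) (hcz : c ≤ z.re) :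
    ‖macdonaldIntegral ν z‖ ≤
      Real.exp (c - z.re) * (1 / 2 * ∫ u, Real.exp (ν.re * u - c * Real.cosh u)) := by
  have hint := (integrable_rexp_sub_mul_cosh ν.re hc).const_mul (Real.exp (c - z.re))
  have h := norm_integral_le_of_norm_le hint (ae_of_all _ fun u ↦
    (norm_expIntegrand Real.cosh ν z u).trans_le ?_)
  · rw [macdonaldIntegral, norm_mul, mul_left_comm, ← integral_const_mul]
    gcongr
    simp
  · rw [← Real.exp_add, Real.exp_le_exp]
    linarith [mul_nonneg (sub_nonneg.2 hcz) (sub_nonneg.2 (Real.one_le_cosh u))]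

lemma tendsto_pow_mul_macdonaldIntegral_mul_exp_atTop (n : ℕ) (ν : ℂ) (hz : 0 < z.re) :
    Tendsto (fun x : ℝ ↦ (z * cexp x) ^ n * macdonaldIntegral ν (z * cexp x)) atTop (𝓝 0) := by
  set B := 1 / 2 * ∫ u, Real.exp (ν.re * u - z.re * Real.cosh u)
  have hpow : Tendsto (fun y : ℝ ↦ y ^ n * Real.exp (-z.re * y)) atTop (𝓝 0) := by
    simpa using tendsto_rpow_mul_exp_neg_mul_atTop_nhds_zero n z.re hz
  have hlim := ((hpow.comp Real.tendsto_exp_atTop).const_mul (‖z‖ ^ n)).mul_const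
    (Real.exp z.re * B)
  rw [mul_zero, zero_mul] at hlim
  refine squeeze_zero_norm' ?_ hlim
  filter_upwards [eventually_ge_atTop 0] with x hx
  have hre : (z * cexp x).re = z.re * Real.exp x := by rw [← ofReal_exp, re_mul_ofReal]
  have hle := norm_macdonaldIntegral_le ν hz
    (hre ▸ le_mul_of_one_le_right hz.le (Real.one_le_exp hx) : z.re ≤ (z * cexp x).re)
  calc ‖(z * cexp x) ^ n * macdonaldIntegral ν (z * cexp x)‖
      = (‖z‖ * Real.exp x) ^ n * ‖macdonaldIntegral ν (z * cexp x)‖ := by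
        rw [norm_mul, norm_pow, norm_mul, norm_exp, ofReal_re]
    _ ≤ (‖z‖ * Real.exp x) ^ n * (Real.exp (z.re - (z * cexp x).re) * B) := by gcongr
    _ = ‖z‖ ^ n * (Real.exp x ^ n * Real.exp (-z.re * Real.exp x)) * (Real.exp z.re * B) := by
        rw [hre, sub_eq_add_neg, Real.exp_add, mul_pow, neg_mul]
        ring

lemma deriv_macdonaldIntegral_mul_exp (ν : ℂ) (hz : 0 < z.re) (x : ℝ) :
    deriv (fun x : ℝ ↦ macdonaldIntegral ν (z * cexp x)) x =
      -(z * cexp x / 2 *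
        (macdonaldIntegral (ν - 1) (z * cexp x) + macdonaldIntegral (ν + 1) (z * cexp x))) := by
  have h := ((hasDerivAt_macdonaldIntegral ν (mul_exp_re_pos hz x)).comp x
    (hasDerivAt_mul_exp z x)).deriv
  rw [Function.comp_def] at h
  rw [h]
  ring

lemma tendsto_flux_macdonaldIntegral_atTop (ν : ℂ) (hz : 0 < z.re) :
    Tendsto (flux fun x ↦ macdonaldIntegral ν (z * cexp x)) atTop (𝓝 0) := by
  have h₀ := tendsto_pow_mul_macdonaldIntegral_mul_exp_atTop 0 ν hz
  have h₁ (μ : ℂ) := tendsto_pow_mul_macdonaldIntegral_mul_exp_atTop 1 μ hz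
  have h := (continuous_im.tendsto _).comp
    (h₀.star.mul (((h₁ (ν - 1)).add (h₁ (ν + 1))).div_const (-2)))
  simp only [star_zero, zero_mul, zero_im] at h
  refine h.congr fun x ↦ ?_
  rw [flux, deriv_macdonaldIntegral_mul_exp ν hz]
  simp only [Function.comp_apply, pow_zero, one_mul, pow_one, starRingEnd_apply]
  ring_nf

lemma expIntegrand_cosh_mul_exp (ν z : ℂ) (x v : ℝ) :
    expIntegrand Real.cosh ν (z * cexp x) (v - x) =
      cexp (-ν * x) * (expIntegrand Real.exp ν (z / 2) v * cexp (-(z / 2) * cexp (2 * x - v))) := by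
  have hcosh : cexp x * Complex.cosh (v - x) = (cexp v + cexp (2 * x - v)) / 2 := by
    rw [Complex.cosh, mul_div_assoc', mul_add, ← Complex.exp_add, ← Complex.exp_add]
    ring_nf
  rw [expIntegrand, expIntegrand, ← Complex.exp_add, ← Complex.exp_add]
  congr 1
  push_cast
  linear_combination -z * hcosh

-- Shifting the integration variable by `x` makes the integrand converge, dominated, to that of `Γ`.
lemma tendsto_exp_mul_macdonaldIntegral_mul_exp_atBot (hν : 0 < ν.re) (hz : 0 < z.re) :
    Tendsto (fun x : ℝ ↦ cexp (ν * x) * macdonaldIntegral ν (z * cexp x)) atBot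
      (𝓝 (1 / 2 * ((z / 2) ^ (-ν) * Gamma ν))) := by
  have hz' : 0 < (z / 2).re := by simpa using hz
  have hE := continuous_expIntegrand Real.continuous_exp ν (z / 2)
  have hlim : Tendsto (fun x : ℝ ↦
      ∫ v : ℝ, expIntegrand Real.exp ν (z / 2) v * cexp (-(z / 2) * cexp (2 * x - v))) atBot
      (𝓝 (∫ v, expIntegrand Real.exp ν (z / 2) v)) := by
    refine tendsto_integral_filter_of_dominated_convergence _
      (Eventually.of_forall fun x ↦ Continuous.aestronglyMeasurable (by fun_prop))
      (Eventually.of_forall fun x ↦ ae_of_all _ fun v ↦ ?_)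
      (integrable_expIntegrand_rexp hν hz').norm (ae_of_all _ fun v ↦ ?_)
    · rw [norm_mul, norm_exp]
      refine mul_le_of_le_one_right (norm_nonneg _) (Real.exp_le_one_iff.2 ?_)
      have hreal : cexp (2 * x - v) = (Real.exp (2 * x - v) : ℝ) := by push_cast; rfl
      rw [hreal, re_mul_ofReal, neg_re]
      exact mul_nonpos_of_nonpos_of_nonneg (neg_nonpos.2 hz'.le) (Real.exp_pos _).le
    · have h := ((tendsto_mul_exp_atBot (-(z / 2))).comp
        (tendsto_atBot_add_const_right _ (-v) (tendsto_id.const_mul_atBot two_pos))).cexp.const_mul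
          (expIntegrand Real.exp ν (z / 2) v)
      simpa [Function.comp_def, sub_eq_add_neg] using h
  rw [integral_expIntegrand_rexp hν hz'] at hlim
  refine (hlim.const_mul (1 / 2)).congr fun x ↦ ?_
  rw [macdonaldIntegral, ← integral_sub_right_eq_self (expIntegrand _ _ _) x]
  rw [integral_congr_ae (ae_of_all _ (expIntegrand_cosh_mul_exp ν z x)), integral_const_mul]
  have hexp : cexp (ν * x) * cexp (-ν * x) = 1 := by simp [← Complex.exp_add]
  linear_combination (-(1 / 2) * ∫ v : ℝ,
    expIntegrand Real.exp ν (z / 2) v * cexp (-(z / 2) * cexp (2 * x - v))) * hexp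

lemma tendsto_mul_macdonaldIntegral_add_one_sub (hν : ν.re = 0) (hz : 0 < z.re) :
    Tendsto (fun x : ℝ ↦ z * cexp x / 2 * macdonaldIntegral (ν + 1) (z * cexp x) -
      (z / 2) ^ (-ν) * Gamma (1 + ν) / 2 * cexp (-ν * x)) atBot (𝓝 0) := by
  have hz₀ : z / 2 ≠ 0 := slitPlane_ne_zero (.inl (by simpa using hz))
  have hlim := tendsto_exp_mul_macdonaldIntegral_mul_exp_atBot (ν := ν + 1) (by simp [hν]) hz
  have hbdd := isBoundedUnder_norm_planeWave hν 0 (z / 2) atBot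
  have h := isBoundedUnder_le_mul_tendsto_zero hbdd (sub_self (_ : ℂ) ▸ hlim.sub_const _)
  refine h.congr fun x ↦ ?_
  have hpow : (z / 2) ^ (-ν) = (z / 2) ^ (-(ν + 1)) * (z / 2) := by
    rw [neg_add, ← sub_eq_add_neg, cpow_sub _ _ hz₀, cpow_one, div_mul_cancel₀ _ hz₀]
  have hexp : cexp (-ν * x) * cexp ((ν + 1) * x) = cexp x := by
    rw [← Complex.exp_add]
    ring_nf
  rw [hpow, ← hexp, planeWave, add_comm ν 1]
  ring

lemma isPlaneWaveAtBot_macdonaldIntegral (hν : ν.re = 0) (hν₀ : ν ≠ 0) (hz : 0 < z.re) :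
    IsPlaneWaveAtBot ν ((z / 2) ^ ν * Gamma (-ν) / 2) ((z / 2) ^ (-ν) * Gamma ν / 2)
      fun x ↦ macdonaldIntegral ν (z * cexp x) := by
  have h := tendsto_mul_macdonaldIntegral_add_one_sub hν hz
  have h' := tendsto_mul_macdonaldIntegral_add_one_sub (ν := -ν) (by simpa using hν) hz
  have hsymm (ζ : ℂ) : macdonaldIntegral (-ν + 1) ζ = macdonaldIntegral (ν - 1) ζ := by
    rw [← macdonaldIntegral_neg, neg_add, neg_neg, sub_eq_add_neg]
  have hΓ : Gamma (1 + ν) = ν * Gamma ν := by rw [add_comm, Gamma_add_one ν hν₀]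
  have hΓ' : Gamma (1 + -ν) = -ν * Gamma (-ν) := by
    rw [add_comm, Gamma_add_one _ (neg_ne_zero.2 hν₀)]
  simp only [hsymm, neg_neg, hΓ, hΓ'] at h h'
  refine ⟨?_, ?_⟩
  · have hsub := (h.sub h').const_mul ν⁻¹
    rw [sub_zero, mul_zero] at hsub
    refine hsub.congr fun x ↦ ?_
    have hrec := macdonaldIntegral_sub_one_sub_macdonaldIntegral_add_one ν (mul_exp_re_pos hz x)
    rw [planeWave]
    field_simp
    linear_combination -2 * hrec
  · have hadd := (h.add h').neg
    rw [add_zero, neg_zero] at hadd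
    refine hadd.congr fun x ↦ ?_
    rw [deriv_macdonaldIntegral_mul_exp ν hz, planeWave]
    ring

end MacdonaldIntegral

section ImaginaryOrder

variable {ν z : ℂ} {t : ℝ}

lemma ne_intCast_of_re_eq_zero (hν : ν.re = 0) (hν₀ : ν ≠ 0) (n : ℤ) : ν ≠ n := by
  rintro rfl
  simp_all

lemma isSchrodingerSolution_macdonaldK (hν : ∀ n : ℤ, ν ≠ n) (hz : z ∈ slitPlane) :
    IsSchrodingerSolution (besselPotential ν z) fun x ↦ macdonaldK ν (z * cexp x) := by
  have hneg : besselPotential (-ν) z = besselPotential ν z := by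
    funext x
    rw [besselPotential, besselPotential, neg_sq]
  have h := ((hneg ▸ isSchrodingerSolution_besselI hz (-ν)).sub
    (isSchrodingerSolution_besselI hz ν)).const_mul (Real.pi / 2 / sin (ν * Real.pi))
  simpa only [← macdonaldK_eq_besselI hν] using h

lemma isPlaneWaveAtBot_macdonaldK (hν : ν.re = 0) (hν₀ : ν ≠ 0) (hz : z ∈ slitPlane) :
    IsPlaneWaveAtBot ν ((z / 2) ^ ν * Gamma (-ν) / 2) ((z / 2) ^ (-ν) * Gamma ν / 2)
      fun x ↦ macdonaldK ν (z * cexp x) := by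
  have hν' := ne_intCast_of_re_eq_zero hν hν₀
  have hI := isSchrodingerSolution_besselI hz
  have hneg := isPlaneWaveAtBot_besselI (ν := -ν) (by simpa using hν) hz
  have h := (hneg.neg_order.sub (isPlaneWaveAtBot_besselI hν hz) (hI (-ν)).differentiable
    (hI ν).differentiable).const_mul (Real.pi / 2 / sin (ν * Real.pi))
  simp only [← macdonaldK_eq_besselI hν'] at h
  have hΓ : Gamma (1 + ν) ≠ 0 := Gamma_ne_zero_of_re_pos (by simp [hν])
  have hΓ' : Gamma (1 + -ν) ≠ 0 := Gamma_ne_zero_of_re_pos (by simp [hν])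
  have hsin : sin (ν * Real.pi) ≠ 0 := fun h₀ ↦ by
    obtain ⟨n, hn⟩ := Complex.sin_eq_zero_iff.1 h₀
    exact hν' n (mul_right_cancel₀ (ofReal_ne_zero.2 Real.pi_ne_zero) hn)
  have hreflect := Gamma_mul_Gamma_one_sub ν
  have hreflect' := Gamma_mul_Gamma_one_sub (-ν)
  rw [sub_eq_add_neg, mul_comm (Real.pi : ℂ), eq_div_iff hsin] at hreflect
  rw [sub_neg_eq_add, mul_neg, Complex.sin_neg, mul_comm (Real.pi : ℂ),
    eq_div_iff (neg_ne_zero.2 hsin)] at hreflect'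
  convert! h using 1
  · field_simp
    linear_combination -(z / 2) ^ ν * hreflect'
  · field_simp
    linear_combination (z / 2) ^ (-ν) * hreflect

lemma tendsto_wronskian_besselI_macdonaldK (hν : ν.re = 0) (hν₀ : ν ≠ 0) (hz : z ∈ slitPlane) :
    Tendsto (wronskian (fun x ↦ besselI ν (z * cexp x)) fun x ↦ macdonaldK ν (z * cexp x)) atBot
      (𝓝 (-1)) := by
  convert! (isPlaneWaveAtBot_besselI hν hz).tendsto_wronskian hν
    (isPlaneWaveAtBot_macdonaldK hν hν₀ hz) using 2
  have hΓ : Gamma (1 + ν) = ν * Gamma ν := by rw [add_comm, Gamma_add_one ν hν₀]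
  have hΓ₀ : Gamma (1 + ν) ≠ 0 := Gamma_ne_zero_of_re_pos (by simp [hν])
  have hpow : (z / 2) ^ ν * (z / 2) ^ (-ν) = 1 := by
    rw [← cpow_add _ _ (by simpa using slitPlane_ne_zero hz), add_neg_cancel, cpow_zero]
  field_simp
  linear_combination -hΓ + ν * Gamma ν * hpow

lemma macdonaldK_eq_macdonaldIntegral (hν : ν.re = 0) (hν₀ : ν ≠ 0) (hz : 0 < z.re) :
    macdonaldK ν z = macdonaldIntegral ν z := by
  have hz' : z ∈ slitPlane := .inl hz
  have hI := isSchrodingerSolution_besselI hz' ν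
  have hK := isSchrodingerSolution_macdonaldK (ne_intCast_of_re_eq_zero hν hν₀) hz'
  have hJ := isSchrodingerSolution_macdonaldIntegral ν hz
  have hsub := (isPlaneWaveAtBot_macdonaldK hν hν₀ hz').sub
    (isPlaneWaveAtBot_macdonaldIntegral hν hν₀ hz) hK.differentiable hJ.differentiable
  have hzero := (hK.sub hJ).eq_zero_of_tendsto_wronskian hI hK
    (by simpa using (isPlaneWaveAtBot_besselI hν hz').tendsto_wronskian hν hsub)
    (by simpa using (isPlaneWaveAtBot_macdonaldK hν hν₀ hz').tendsto_wronskian hν hsub)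
    (tendsto_wronskian_besselI_macdonaldK hν hν₀ hz') (neg_ne_zero.2 one_ne_zero)
  simpa [sub_eq_zero] using congr_fun hzero 0

lemma normSq_cpow_mul_I (hz : z ≠ 0) (t : ℝ) :
    normSq (z ^ (t * I)) = Real.exp (-2 * (t * arg z)) := by
  rw [normSq_eq_norm_sq, norm_cpow_of_ne_zero hz, re_ofReal_mul, I_re, mul_zero,
    Real.rpow_zero, im_ofReal_mul, I_im, mul_one, ← Real.exp_zero, ← Real.exp_sub,
    ← Real.exp_nat_mul]
  push_cast
  ring_nf

lemma tendsto_flux_macdonaldK (ht : t ≠ 0) (hz : z ∈ slitPlane) :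
    Tendsto (flux fun x ↦ macdonaldK (t * I) (z * cexp x)) atBot
      (𝓝 (-(t * Real.sinh (2 * (t * arg z)) * normSq (Gamma (t * I)) / 2))) := by
  have hz₀ : z / 2 ≠ 0 := by simpa using slitPlane_ne_zero hz
  have harg : arg (z / 2) = arg z := by
    simpa [div_eq_mul_inv] using arg_mul_real (r := 2⁻¹) (by norm_num) z
  have hΓ : normSq (Gamma (-(t * I))) = normSq (Gamma (t * I)) := by
    rw [← normSq_conj, ← Gamma_conj]
    simp
  have hpow := normSq_cpow_mul_I hz₀ t
  have hpow' := normSq_cpow_mul_I hz₀ (-t)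
  rw [ofReal_neg, neg_mul] at hpow'
  convert! (isPlaneWaveAtBot_macdonaldK (by simp) (by simpa using ht) hz).tendsto_flux using 2
  rw [map_div₀, map_div₀, map_mul, map_mul, hpow, hpow', hΓ, harg, Real.sinh_eq]
  simp only [neg_mul, normSq_ofNat, mul_neg, neg_neg]
  ring_nf

lemma mul_sinh_mul_pos {a : ℝ} (ht : t ≠ 0) (ha : 0 < a) : 0 < t * Real.sinh (2 * (t * a)) := by
  rcases ht.lt_or_gt with h | h
  · exact mul_pos_of_neg_of_neg h (Real.sinh_neg_iff.2 (by linarith [mul_neg_of_neg_of_pos h ha]))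
  · exact mul_pos h (Real.sinh_pos_iff.2 (by positivity))

lemma mul_sinh_mul_normSq_Gamma_pos (ht : t ≠ 0) (hz : 0 < z.im) :
    0 < t * Real.sinh (2 * (t * arg z)) * normSq (Gamma (t * I)) := by
  have harg : 0 < arg z := (arg_nonneg_iff.2 hz.le).lt_of_ne fun h ↦
    hz.ne' (arg_eq_zero_iff.1 h.symm).2
  have hΓ : Gamma (t * I) ≠ 0 := by
    refine Gamma_ne_zero fun n h ↦ ?_
    exact ne_intCast_of_re_eq_zero (ν := t * I) (by simp) (by simpa using ht) (-n)
      (by simpa using h)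
  exact mul_pos (mul_sinh_mul_pos ht harg) (normSq_pos.2 hΓ)

lemma macdonaldK_ne_zero_of_im_pos_of_re_nonpos (ht : t ≠ 0) (him : 0 < z.im) (hre : z.re ≤ 0) :
    macdonaldK (t * I) z ≠ 0 := by
  intro h₀
  have hz : z ∈ slitPlane := .inr him.ne'
  have hK := isSchrodingerSolution_macdonaldK
    (ne_intCast_of_re_eq_zero (ν := t * I) (by simp) (by simpa using ht)) hz
  have hV (x : ℝ) : (besselPotential (t * I) z x).im ≤ 0 := by
    rw [besselPotential_im]
    exact mul_nonpos_of_nonpos_of_nonneg (mul_nonpos_of_nonpos_of_nonneg (by linarith) him.le)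
      (sq_nonneg _)
  have hlim := (hK.flux_antitone hV).ge_of_tendsto (tendsto_flux_macdonaldK ht hz) 0
  rw [flux_eq_zero_of_eq_zero (by simpa using h₀)] at hlim
  linarith [mul_sinh_mul_normSq_Gamma_pos ht him]

lemma macdonaldK_ne_zero_of_im_pos_of_re_pos (ht : t ≠ 0) (him : 0 < z.im) (hre : 0 < z.re) :
    macdonaldK (t * I) z ≠ 0 := by
  intro h₀
  have hz : z ∈ slitPlane := .inl hre
  have hν : (t * I).re = 0 := by simp
  have hν₀ : t * I ≠ 0 := by simpa using ht
  have hI := isSchrodingerSolution_besselI hz (t * I)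
  have hK := isSchrodingerSolution_macdonaldK (ne_intCast_of_re_eq_zero hν hν₀) hz
  have hV (x : ℝ) : 0 < (besselPotential (t * I) z x).im := by
    rw [besselPotential_im]
    positivity
  have hflux : Tendsto (flux fun x ↦ macdonaldK (t * I) (z * cexp x)) atTop (𝓝 0) := by
    simpa only [macdonaldK_eq_macdonaldIntegral hν hν₀ (mul_exp_re_pos hre _)] using
      tendsto_flux_macdonaldIntegral_atTop (t * I) hre
  have hzero {x : ℝ} (hx : 0 < x) : macdonaldK (t * I) (z * cexp x) = 0 :=
    hK.eq_zero_of_tendsto_flux_atTop hV (flux_eq_zero_of_eq_zero (by simpa using h₀)) hflux hx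
  have hderiv : deriv (fun x : ℝ ↦ macdonaldK (t * I) (z * cexp x)) 1 = 0 := by
    have h : (fun x : ℝ ↦ macdonaldK (t * I) (z * cexp x)) =ᶠ[𝓝 1] fun _ ↦ 0 := by
      filter_upwards [Ioi_mem_nhds one_pos] with x hx using hzero hx
    rw [h.deriv_eq, deriv_const]
  have hw := hI.wronskian_eq_of_tendsto hK (tendsto_wronskian_besselI_macdonaldK hν hν₀ hz) 1
  rw [wronskian, hzero one_pos, hderiv, mul_zero, mul_zero, sub_zero] at hw
  exact neg_ne_zero.2 one_ne_zero hw.symm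

lemma macdonaldK_ne_zero_of_im_pos (ht : t ≠ 0) (hz : 0 < z.im) : macdonaldK (t * I) z ≠ 0 :=
  (le_or_gt z.re 0).elim (macdonaldK_ne_zero_of_im_pos_of_re_nonpos ht hz)
    (macdonaldK_ne_zero_of_im_pos_of_re_pos ht hz)

end ImaginaryOrder

lemma macdonaldS_conj (a z : ℂ) : macdonaldS (conj a) (conj z) = conj (macdonaldS a z) := by
  rw [macdonaldS, macdonaldS, Complex.conj_tsum]
  congr with k
  have heval : (ascPochhammer ℂ k).eval (conj a) = conj ((ascPochhammer ℂ k).eval a) := by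
    rw [← ascPochhammer_map (starRingEnd ℂ), Polynomial.eval_map_apply]
    simp
  simp [heval, map_ofNat]

lemma macdonaldK_conj (ν : ℂ) {z : ℂ} (hz : z ∈ slitPlane) :
    macdonaldK (conj ν) (conj z) = conj (macdonaldK ν z) := by
  have hpow (μ : ℂ) : (conj z / 2) ^ conj μ = conj ((z / 2) ^ μ) := by
    have harg := (mem_slitPlane_iff_arg.1 (half_mem_slitPlane hz)).1
    rw [← conj_conj μ, cpow_conj (z / 2) _ harg, conj_conj, conj_conj, map_div₀, map_ofNat]
  have hsub : 1 - conj ν = conj (1 - ν) := by simp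
  have hadd : 1 + conj ν = conj (1 + ν) := by simp
  have hsin : sin (conj ν * Real.pi) = conj (sin (ν * Real.pi)) := by
    rw [← Complex.sin_conj, map_mul, conj_ofReal]
  rw [macdonaldK, macdonaldK, ← map_neg, hpow, hpow, hsin, hsub, hadd, Gamma_conj, Gamma_conj,
    macdonaldS_conj, macdonaldS_conj]
  simp [map_ofNat]

lemma macdonaldK_ne_zero_of_im_ne_zero {t : ℝ} (ht : t ≠ 0) {z : ℂ} (hz : z.im ≠ 0) :
    macdonaldK (t * I) z ≠ 0 := by
  rcases hz.lt_or_gt with him | him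
  · have h := macdonaldK_ne_zero_of_im_pos (t := -t) (z := conj z) (neg_ne_zero.2 ht) (by simpa)
    have hν : ((-t : ℝ) : ℂ) * I = conj (t * I) := by simp
    rw [hν, macdonaldK_conj _ (.inr hz)] at h
    exact (map_ne_zero _).1 h
  · exact macdonaldK_ne_zero_of_im_pos ht him

/-- For purely imaginary order, every zero of the Macdonald function in the principal
Riemann sheet lies on the positive real semiaxis. -/
theorem macdonaldK_imaginary_order_zeros_real (t : ℝ) (ht : t ≠ 0) (z : ℂ)
    (hz : z ∈ Complex.slitPlane) (h0 : macdonaldK ((t : ℂ) * Complex.I) z = 0) :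
    ∃ x : ℝ, 0 < x ∧ z = (x : ℂ) := by
  have him : z.im = 0 := by
    by_contra him
    exact macdonaldK_ne_zero_of_im_ne_zero ht him h0
  have hreal : (z.re : ℂ) = z := conj_eq_iff_re.1 (conj_eq_iff_im.2 him)
  exact ⟨z.re, ofReal_mem_slitPlane.1 (hreal ▸ hz), hreal.symm⟩
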